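/- arXiv:2504.00807 — 5 statements merged into one kernel-verified Lean document; each statement's English description precedes it below -/
import Mathlib

section
/- Let T = (V, root, par) be a rooted directed tree that is narrow with width m. Then the Cesàro map Λ_T sends every f ∈ ℓ²(V) to an element of ℓ²(V), and ‖Λ_T f‖ ≤ 2√m · ‖f‖ for all f ∈ ℓ²(V); hence the Cesàro operator C_T is a bounded linear operator on ℓ²(V) with ‖C_T‖ ≤ 2√(width(T)). -/
noncomputable section

open scoped ENNReal

/-- A rooted directed tree encoded by a vertex set `V`, a root, and a parent map. -/
structure TreeData (V : Type) where
  root : V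
  par : V → V
  par_root : par root = root
  hroot : ∀ v : V, ∃ n : ℕ, par^[n] v = root

namespace TreeData

variable {V : Type}

open scoped Classical in
/-- The depth of a vertex: the least `n` with `par^[n] v = root`. -/
def dep (T : TreeData V) (v : V) : ℕ := Nat.find (T.hroot v)

/-- The Cesàro map `Λ_T`. -/
def cesaro (T : TreeData V) (f : V → ℂ) : V → ℂ := fun v =>
  ((T.dep v : ℂ) + 1)⁻¹ * ∑ j ∈ Finset.range (T.dep v + 1), f (T.par^[j] v)

/-- The `n`-th level `Chi^⟨n⟩(root)`: vertices of depth `n`. -/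
def level (T : TreeData V) (n : ℕ) : Set V := {v : V | T.dep v = n}

/-- The set of children of a vertex. -/
def chi (T : TreeData V) (u : V) : Set V := {v : V | v ≠ T.root ∧ T.par v = u}

end TreeData

/-- The Hilbert space `ℓ²(V)` of square-summable complex functions on `V`. -/
abbrev L2 (V : Type) : Type := lp (fun _ : V => ℂ) 2

lemma hardy_aux (a : ℕ → ℝ) (N : ℕ) :
    ∑ n ∈ Finset.range N, (((n : ℝ) + 1)⁻¹ * ∑ k ∈ Finset.range (n + 1), a k) ^ 2
      + 2 * (∑ k ∈ Finset.range N, a k) ^ 2 / N ≤ 4 * ∑ n ∈ Finset.range N, a n ^ 2 := by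
  induction N with
  | zero => simp
  | succ N ih =>
    rw [Finset.sum_range_succ, Finset.sum_range_succ (fun n => a n ^ 2)]
    have hS : ∑ k ∈ Finset.range (N + 1), a k = ∑ k ∈ Finset.range N, a k + a N :=
      Finset.sum_range_succ _ _
    set S := ∑ k ∈ Finset.range N, a k with hSdef
    set S' := ∑ k ∈ Finset.range (N + 1), a k
    have key : (((N : ℝ) + 1)⁻¹ * S') ^ 2 + 2 * S' ^ 2 / ((N + 1 : ℕ) : ℝ)
        ≤ 2 * S ^ 2 / N + 4 * a N ^ 2 := by
      set A := ((N : ℝ) + 1)⁻¹ * S' with hA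
      have hN : (0 : ℝ) < (N : ℝ) + 1 := by positivity
      have hS' : S' = (N + 1) * A := by rw [hA]; field_simp
      have e1 : 2 * S' ^ 2 / ((N + 1 : ℕ) : ℝ) = 2 * (N + 1) * A ^ 2 := by
        rw [hS']; push_cast; field_simp
      rw [e1]
      have e2 : ∃ B : ℝ, S = N * B ∧ 2 * S ^ 2 / N = 2 * N * B ^ 2 := by
        rcases Nat.eq_zero_or_pos N with h | h
        · subst h; exact ⟨0, by simp [hSdef], by simp⟩
        · have : (N : ℝ) ≠ 0 := by positivity
          exact ⟨S / N, by field_simp, by field_simp⟩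
      obtain ⟨B, hB, hB2⟩ := e2
      rw [hB2]
      have ha : a N = (N + 1) * A - N * B := by rw [← hS', ← hB]; linarith
      have h1 : 0 ≤ (N : ℝ) * (A - B) ^ 2 := by positivity
      have h2 : 4 * a N * A ≤ A ^ 2 + 4 * a N ^ 2 := by nlinarith [sq_nonneg (A - 2 * a N)]
      have h3 : 4 * a N * A = 4 * ((N + 1) * A - N * B) * A := by rw [← ha]
      nlinarith
    linarith

lemma TreeData.dep_iter {V : Type} (T : TreeData V) (v : V) (j : ℕ) (hj : j ≤ T.dep v) :
    T.dep (T.par^[j] v) = T.dep v - j := by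
  classical
  have hv : T.par^[T.dep v] v = T.root := by
    unfold TreeData.dep; exact Nat.find_spec (T.hroot v)
  have hmin : ∀ n, T.par^[n] v = T.root → T.dep v ≤ n := by
    intro n hn; unfold TreeData.dep; exact Nat.find_min' (T.hroot v) hn
  apply le_antisymm
  · unfold TreeData.dep
    apply Nat.find_min'
    rw [← Function.iterate_add_apply]
    change T.par^[T.dep v - j + j] v = T.root
    rw [Nat.sub_add_cancel hj, hv]
  · have h : T.par^[T.dep (T.par^[j] v)] (T.par^[j] v) = T.root := by
      unfold TreeData.dep; exact Nat.find_spec (T.hroot _)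
    rw [← Function.iterate_add_apply] at h
    have := hmin _ h
    omega

lemma cesaro_sum_bound {V : Type} (T : TreeData V) (m : ℕ)
    (hm : ∀ n : ℕ, (T.level n).encard ≤ m) (f : V → ℂ) (Q : ℝ)
    (hQ : ∀ s : Finset V, ∑ v ∈ s, ‖f v‖ ^ 2 ≤ Q) (s : Finset V) :
    ∑ v ∈ s, ‖T.cesaro f v‖ ^ 2 ≤ 4 * m * Q := by
  classical
  have hfin : ∀ n, (T.level n).Finite := fun n =>
    Set.finite_of_encard_le_coe (hm n)
  let L : ℕ → Finset V := fun n => (hfin n).toFinset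
  have hL : ∀ n v, v ∈ L n ↔ T.dep v = n := by
    intro n v; simp [L, TreeData.level]
  have hLc : ∀ n, (L n).card ≤ m := by
    intro n
    have h := hm n
    rw [(hfin n).encard_eq_coe_toFinset_card] at h
    exact_mod_cast h
  have hdisj : ∀ N : ℕ, Set.PairwiseDisjoint (↑(Finset.range N)) L := by
    intro N i _ j _ hij
    refine Finset.disjoint_left.2 fun v hi hj => hij ?_
    rw [← (hL i v).1 hi, (hL j v).1 hj]
  let a : ℕ → ℝ := fun n => Real.sqrt (∑ v ∈ L n, ‖f v‖ ^ 2)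
  have ha2 : ∀ n, a n ^ 2 = ∑ v ∈ L n, ‖f v‖ ^ 2 := fun n =>
    Real.sq_sqrt (Finset.sum_nonneg fun _ _ => by positivity)
  have hfa : ∀ v, ‖f v‖ ≤ a (T.dep v) := by
    intro v
    apply Real.le_sqrt_of_sq_le
    exact Finset.single_le_sum (f := fun v => ‖f v‖ ^ 2) (fun _ _ => by positivity)
      ((hL _ v).2 rfl)
  have hpt : ∀ v, ‖T.cesaro f v‖ ≤
      ((T.dep v : ℝ) + 1)⁻¹ * ∑ k ∈ Finset.range (T.dep v + 1), a k := by
    intro v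
    unfold TreeData.cesaro
    rw [norm_mul, norm_inv]
    have h1 : ‖(T.dep v : ℂ) + 1‖ = (T.dep v : ℝ) + 1 := by
      have := Complex.norm_natCast (T.dep v + 1)
      push_cast at this
      exact this
    rw [h1]
    gcongr
    refine (norm_sum_le _ _).trans ?_
    rw [← Finset.sum_range_reflect a]
    apply Finset.sum_le_sum
    intro j hj
    have hj' : j ≤ T.dep v := by simpa [Nat.lt_succ_iff] using hj
    have := hfa (T.par^[j] v)
    rw [T.dep_iter v j hj'] at this
    simpa using this
  obtain ⟨N, hN⟩ : ∃ N, ∀ v ∈ s, T.dep v < N :=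
    ⟨s.sup T.dep + 1, fun v hv => Nat.lt_succ_of_le (Finset.le_sup hv)⟩
  have hsub : s ⊆ (Finset.range N).biUnion L := by
    intro v hv
    exact Finset.mem_biUnion.2 ⟨T.dep v, Finset.mem_range.2 (hN v hv), (hL _ v).2 rfl⟩
  let A : ℕ → ℝ := fun n => (((n : ℝ) + 1)⁻¹ * ∑ k ∈ Finset.range (n + 1), a k) ^ 2
  have hhardy : ∑ n ∈ Finset.range N, A n ≤ 4 * ∑ n ∈ Finset.range N, a n ^ 2 := by
    have h := hardy_aux a N
    have : 0 ≤ 2 * (∑ k ∈ Finset.range N, a k) ^ 2 / (N : ℝ) := by positivity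
    linarith
  have hQ' : ∑ n ∈ Finset.range N, a n ^ 2 ≤ Q := by
    have := hQ ((Finset.range N).biUnion L)
    rw [Finset.sum_biUnion (hdisj N)] at this
    simpa only [ha2] using this
  calc ∑ v ∈ s, ‖T.cesaro f v‖ ^ 2
      ≤ ∑ v ∈ (Finset.range N).biUnion L, ‖T.cesaro f v‖ ^ 2 :=
        Finset.sum_le_sum_of_subset_of_nonneg hsub fun _ _ _ => by positivity
    _ = ∑ n ∈ Finset.range N, ∑ v ∈ L n, ‖T.cesaro f v‖ ^ 2 :=
        Finset.sum_biUnion (hdisj N)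
    _ ≤ ∑ n ∈ Finset.range N, m * A n := by
        apply Finset.sum_le_sum
        intro n _
        calc ∑ v ∈ L n, ‖T.cesaro f v‖ ^ 2 ≤ ∑ v ∈ L n, A n := by
              apply Finset.sum_le_sum
              intro v hv
              have h := hpt v
              rw [(hL n v).1 hv] at h
              exact pow_le_pow_left₀ (norm_nonneg _) h 2
          _ = (L n).card * A n := by simp
          _ ≤ m * A n := by
              apply mul_le_mul_of_nonneg_right
              · exact_mod_cast hLc n
              · exact sq_nonneg _
    _ = m * ∑ n ∈ Finset.range N, A n := by rw [Finset.mul_sum]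
    _ ≤ m * (4 * Q) := by
        apply mul_le_mul_of_nonneg_left _ (Nat.cast_nonneg m)
        linarith
    _ = 4 * m * Q := by ring

/-- If `T` is a narrow rooted directed tree of width `m`, then the Cesàro map
sends `ℓ²(V)` into `ℓ²(V)` with `‖Λ_T f‖ ≤ 2√m ‖f‖`; hence the Cesàro operator `C_T` is a
bounded linear operator on `ℓ²(V)` of norm at most `2 √(width T)`. -/
theorem cesaro_bounded_of_narrow {V : Type} [Countable V] [Infinite V]
    (T : TreeData V) (m : ℕ)
    (hm : ∀ n : ℕ, (T.level n).encard ≤ m)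
    (hwidth : ∀ m' : ℕ, (∀ n : ℕ, (T.level n).encard ≤ m') → m ≤ m') :
    (∀ f : L2 V, ∃ hf : Memℓp (T.cesaro ⇑f) 2,
        ‖(⟨T.cesaro ⇑f, hf⟩ : L2 V)‖ ≤ 2 * Real.sqrt m * ‖f‖) ∧
    ∃ C : L2 V →L[ℂ] L2 V, (∀ (f : L2 V) (v : V), C f v = T.cesaro ⇑f v) ∧
        ‖C‖ ≤ 2 * Real.sqrt m := by
  have hbd : ∀ (f : L2 V) (s : Finset V),
      ∑ v ∈ s, ‖T.cesaro ⇑f v‖ ^ (2 : ℝ≥0∞).toReal ≤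
        (2 * Real.sqrt m * ‖f‖) ^ (2 : ℝ≥0∞).toReal := by
    intro f s
    have h := cesaro_sum_bound T m hm (⇑f) (‖f‖ ^ 2) (fun s => by
      have := lp.sum_rpow_le_norm_rpow (p := 2) (by norm_num) f s
      simpa using this) s
    have e : (2 * Real.sqrt m * ‖f‖) ^ 2 = 4 * m * ‖f‖ ^ 2 := by
      rw [mul_pow, mul_pow, Real.sq_sqrt (Nat.cast_nonneg m)]; norm_num
    rw [← e] at h
    simpa using h
  have hmem : ∀ f : L2 V, Memℓp (T.cesaro ⇑f) 2 := fun f => memℓp_gen' (hbd f)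
  have hnorm : ∀ f : L2 V, ‖(⟨T.cesaro ⇑f, hmem f⟩ : L2 V)‖ ≤ 2 * Real.sqrt m * ‖f‖ := by
    intro f
    exact lp.norm_le_of_forall_sum_le (p := 2) (by norm_num) (by positivity) (hbd f)
  refine ⟨fun f => ⟨hmem f, hnorm f⟩, ?_⟩
  let C₀ : L2 V →ₗ[ℂ] L2 V :=
    { toFun := fun f => ⟨T.cesaro ⇑f, hmem f⟩
      map_add' := by
        intro f g
        ext v
        simp [TreeData.cesaro, Finset.sum_add_distrib, mul_add]
        rfl
      map_smul' := by
        intro c f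
        ext v
        simp only [TreeData.cesaro, lp.coeFn_smul, Pi.smul_apply, smul_eq_mul, RingHom.id_apply,
          ← Finset.mul_sum]
        ring }
  exact ⟨C₀.mkContinuous _ hnorm, fun f v => rfl,
    LinearMap.mkContinuous_norm_le _ (by positivity) _⟩
end
end

section
/- Let T = (V, root, par) be a narrow rooted directed tree. Then the bounded Cesàro operator C_T on ℓ²(V) satisfies ‖C_T‖ ≥ 2. -/
noncomputable section

open scoped ENNReal

namespace TreeData

variable {V : Type}

lemma iter_dep (T : TreeData V) (v : V) : T.par^[T.dep v] v = T.root := by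
  classical
  exact Nat.find_spec (T.hroot v)

lemma dep_le (T : TreeData V) (v : V) (n : ℕ) (h : T.par^[n] v = T.root) : T.dep v ≤ n := by
  classical
  exact Nat.find_min' (T.hroot v) h

lemma dep_iter_s1 (T : TreeData V) (v : V) (j : ℕ) (hj : j ≤ T.dep v) :
    T.dep (T.par^[j] v) = T.dep v - j := by
  apply le_antisymm
  · apply dep_le
    rw [← Function.iterate_add_apply, Nat.sub_add_cancel hj, iter_dep]
  · have h := T.iter_dep (T.par^[j] v)
    rw [← Function.iterate_add_apply] at h
    have := T.dep_le _ _ h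
    omega

lemma finite_below (T : TreeData V) (m : ℕ) (hm : ∀ n : ℕ, (T.level n).encard ≤ m) (N : ℕ) :
    {v : V | T.dep v < N}.Finite := by
  have : {v : V | T.dep v < N} = ⋃ n ∈ Finset.range N, T.level n := by
    ext v; simp [level]
  rw [this]
  apply Set.Finite.biUnion (Finset.finite_toSet _)
  intro n _
  exact Set.finite_of_encard_le_coe (hm n)

lemma level_nonempty [Infinite V] (T : TreeData V) (m : ℕ)
    (hm : ∀ n : ℕ, (T.level n).encard ≤ m) (n : ℕ) : ∃ v, T.dep v = n := by
  have : ∃ v, n ≤ T.dep v := by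
    by_contra! h
    have h1 := T.finite_below m hm n
    have h2 : {v : V | T.dep v < n} = Set.univ := by ext v; simp [h v]
    rw [h2] at h1
    exact Set.infinite_univ h1
  obtain ⟨v, hv⟩ := this
  refine ⟨T.par^[T.dep v - n] v, ?_⟩
  rw [dep_iter_s1 _ _ _ (by omega)]
  omega

end TreeData

lemma sum_inv_sqrt_ge' (n : ℕ) :
    2 * √((n : ℝ) + 1) - 2 ≤ ∑ k ∈ Finset.range n, 1 / √((k : ℝ) + 1) := by
  induction n with
  | zero => simp
  | succ n ih =>
    rw [Finset.sum_range_succ]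
    push_cast
    have hb : 0 < √((n : ℝ) + 1) := by positivity
    have hb2 := Real.sq_sqrt (show (0 : ℝ) ≤ (n : ℝ) + 1 + 1 by positivity)
    have ha2 := Real.sq_sqrt (show (0 : ℝ) ≤ (n : ℝ) + 1 by positivity)
    have : 2 * √((n : ℝ) + 1 + 1) - 2 * √((n : ℝ) + 1) ≤ 1 / √((n : ℝ) + 1) := by
      rw [le_div_iff₀ hb]
      nlinarith [sq_nonneg (√((n : ℝ) + 1 + 1) - √((n : ℝ) + 1))]
    linarith

lemma sum_inv_sqrt_ge (n : ℕ) :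
    2 * √((n : ℝ) + 1) - 2 ≤ ∑ k ∈ Finset.range (n + 1), 1 / √((k : ℝ) + 1) := by
  rw [Finset.sum_range_succ]
  have := sum_inv_sqrt_ge' n
  have : 0 ≤ 1 / √((n : ℝ) + 1) := by positivity
  linarith

lemma cesaro_sq_ge (n : ℕ) :
    4 * (1 / ((n : ℝ) + 1)) - 8 * (1 / ((n : ℝ) + 1) ^ (3 / 2 : ℝ)) ≤
      (((n : ℝ) + 1)⁻¹ * ∑ k ∈ Finset.range (n + 1), 1 / √((k : ℝ) + 1)) ^ 2 := by
  have h := sum_inv_sqrt_ge n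
  set S := ∑ k ∈ Finset.range (n + 1), 1 / √((k : ℝ) + 1)
  have hx : (0 : ℝ) < (n : ℝ) + 1 := by positivity
  have e : ((n : ℝ) + 1) ^ (3 / 2 : ℝ) = √((n : ℝ) + 1) ^ 3 := by
    rw [Real.sqrt_eq_rpow, ← Real.rpow_natCast, ← Real.rpow_mul hx.le]; norm_num
  rw [e]
  have hs1 : 1 ≤ √((n : ℝ) + 1) := by
    rw [Real.one_le_sqrt]; linarith [(Nat.cast_nonneg n : (0 : ℝ) ≤ n)]
  have hs2 := Real.sq_sqrt hx.le
  set s := √((n : ℝ) + 1)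
  rw [← hs2]
  have hs : 0 < s := by linarith
  calc 4 * (1 / s ^ 2) - 8 * (1 / s ^ 3) ≤ ((s ^ 2)⁻¹ * (2 * s - 2)) ^ 2 := by
        have : ((s ^ 2)⁻¹ * (2 * s - 2)) ^ 2 = 4 * (1 / s ^ 2) - 8 * (1 / s ^ 3) + 4 / s ^ 4 := by
          field_simp; ring
        rw [this]
        have : 0 ≤ 4 / s ^ 4 := by positivity
        linarith
    _ ≤ _ := by
        have : 0 ≤ 2 * s - 2 := by linarith
        gcongr

/-- For a narrow rooted directed tree `T`, the bounded Cesàro operator `C_T`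
on `ℓ²(V)` has norm at least `2`. -/
theorem two_le_norm_cesaro {V : Type} [Countable V] [Infinite V]
    (T : TreeData V) (m : ℕ) (hm : ∀ n : ℕ, (T.level n).encard ≤ m)
    (C : L2 V →L[ℂ] L2 V) (hC : ∀ (f : L2 V) (v : V), C f v = T.cesaro ⇑f v) :
    2 ≤ ‖C‖ := by
  classical
  have hB : ∀ N : ℕ, ∃ B : Finset V, ∀ v, v ∈ B ↔ T.dep v < N := fun N =>
    ⟨(T.finite_below m hm N).toFinset, by simp⟩
  choose B hB using hB
  have hsum : Summable (fun n : ℕ => 1 / ((n : ℝ) + 1) ^ (3 / 2 : ℝ)) := by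
    have := (Real.summable_one_div_nat_rpow (p := 3 / 2)).2 (by norm_num)
    have := (summable_nat_add_iff 1).2 this
    simpa using this
  set K := ∑' n : ℕ, 1 / ((n : ℝ) + 1) ^ (3 / 2 : ℝ) with hK
  have fib : ∀ (N : ℕ) (h : ℕ → ℝ), ∑ v ∈ B N, h (T.dep v) =
      ∑ n ∈ Finset.range N, (((B N).filter (fun v => T.dep v = n)).card : ℝ) * h n := by
    intro N h
    rw [← Finset.sum_fiberwise_of_maps_to (s := B N) (t := Finset.range N) (g := T.dep)
      (fun v hv => Finset.mem_range.2 ((hB N v).1 hv))]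
    refine Finset.sum_congr rfl fun n _ => ?_
    rw [Finset.sum_congr rfl (g := fun _ => h n)
      (fun v hv => by rw [(Finset.mem_filter.1 hv).2])]
    simp
  have hcard : ∀ N n, ((B N).filter (fun v => T.dep v = n)).card ≤ m := by
    intro N n
    have h1 : (((B N).filter (fun v => T.dep v = n) : Finset V) : Set V).encard ≤ m :=
      (Set.encard_le_encard (by intro v hv; simpa [TreeData.level] using
        (Finset.mem_filter.1 (Finset.mem_coe.1 hv)).2)).trans (hm n)
    rw [Set.encard_coe_eq_coe_finsetCard] at h1
    exact_mod_cast h1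
  have hcard1 : ∀ N, ∀ n < N, 1 ≤ ((B N).filter (fun v => T.dep v = n)).card := by
    intro N n hn
    obtain ⟨v, hv⟩ := T.level_nonempty m hm n
    exact Finset.card_pos.2 ⟨v, by simp [hB, hv, hn]⟩
  have key : ∀ N, 4 * (∑ v ∈ B N, 1 / ((T.dep v : ℝ) + 1)) - 8 * (m * K) ≤
      ‖C‖ ^ 2 * ∑ v ∈ B N, 1 / ((T.dep v : ℝ) + 1) := by
    intro N
    set f : L2 V := ∑ v ∈ B N, lp.single 2 v ((1 / √((T.dep v : ℝ) + 1) : ℝ) : ℂ) with hf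
    have hfv : ∀ v ∈ B N, f v = ((1 / √((T.dep v : ℝ) + 1) : ℝ) : ℂ) := by
      intro v hv
      rw [hf, lp.coeFn_sum, Finset.sum_apply, Finset.sum_eq_single v]
      · simp
      · intro b _ hb
        simp [lp.single_apply, hb.symm]
      · exact fun h => absurd hv h
    have hfn : ‖f‖ ^ 2 = ∑ v ∈ B N, 1 / ((T.dep v : ℝ) + 1) := by
      have := lp.norm_sum_single (p := 2) (E := fun _ : V => ℂ) (by norm_num)
        (fun v => ((1 / √((T.dep v : ℝ) + 1) : ℝ) : ℂ)) (B N)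
      simp only [ENNReal.toReal_ofNat, Real.rpow_ofNat] at this
      rw [hf, this]
      refine Finset.sum_congr rfl fun v _ => ?_
      rw [Complex.norm_real, Real.norm_eq_abs, sq_abs, div_pow, Real.sq_sqrt (by positivity)]
      simp
    have hCv : ∀ v ∈ B N, ‖C f v‖ ^ 2 = (((T.dep v : ℝ) + 1)⁻¹ *
        ∑ k ∈ Finset.range (T.dep v + 1), 1 / √((k : ℝ) + 1)) ^ 2 := by
      intro v hv
      have : C f v = (((((T.dep v : ℝ) + 1)⁻¹ *
        ∑ k ∈ Finset.range (T.dep v + 1), 1 / √((k : ℝ) + 1)) : ℝ) : ℂ) := by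
        rw [hC, TreeData.cesaro, ← Finset.sum_range_reflect (fun k : ℕ => 1 / √((k : ℝ) + 1))]
        rw [Complex.ofReal_mul, Complex.ofReal_sum]
        congr 1
        · push_cast; rfl
        refine Finset.sum_congr rfl fun j hj => ?_
        have hj' : j ≤ T.dep v := by have := Finset.mem_range.1 hj; omega
        have hd := T.dep_iter_s1 v j hj'
        have hvN := (hB N v).1 hv
        rw [hfv _ ((hB N _).2 (by omega)), hd]
        congr 5
      rw [this, Complex.norm_real, Real.norm_eq_abs, sq_abs]
    have hlow : ∑ v ∈ B N, ‖C f v‖ ^ 2 ≤ ‖C f‖ ^ 2 := by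
      have := lp.sum_rpow_le_norm_rpow (p := 2) (by norm_num) (C f) (B N)
      simpa using this
    have hup : ‖C f‖ ^ 2 ≤ ‖C‖ ^ 2 * ‖f‖ ^ 2 := by
      rw [← mul_pow]
      gcongr
      exact C.le_opNorm f
    rw [hfn] at hup
    refine le_trans ?_ (hlow.trans hup)
    have h3 : ∑ v ∈ B N, 1 / ((T.dep v : ℝ) + 1) ^ (3 / 2 : ℝ) ≤ m * K := by
      rw [fib N (fun n => 1 / ((n : ℝ) + 1) ^ (3 / 2 : ℝ))]
      calc _ ≤ ∑ n ∈ Finset.range N, (m : ℝ) * (1 / ((n : ℝ) + 1) ^ (3 / 2 : ℝ)) := by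
            gcongr with n hn
            exact hcard N n
        _ = m * ∑ n ∈ Finset.range N, (1 / ((n : ℝ) + 1) ^ (3 / 2 : ℝ)) := by
            rw [Finset.mul_sum]
        _ ≤ m * K := by
            gcongr
            exact hsum.sum_le_tsum _ (fun n _ => by positivity)
    calc _ ≤ 4 * (∑ v ∈ B N, 1 / ((T.dep v : ℝ) + 1)) -
          8 * ∑ v ∈ B N, 1 / ((T.dep v : ℝ) + 1) ^ (3 / 2 : ℝ) := by linarith
      _ = ∑ v ∈ B N, (4 * (1 / ((T.dep v : ℝ) + 1)) -
          8 * (1 / ((T.dep v : ℝ) + 1) ^ (3 / 2 : ℝ))) := by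
          rw [Finset.mul_sum, Finset.mul_sum, Finset.sum_sub_distrib]
      _ ≤ _ := by
          refine Finset.sum_le_sum fun v hv => ?_
          rw [hCv v hv]
          exact cesaro_sq_ge _
  by_contra! hlt
  have hpos : 0 < 4 - ‖C‖ ^ 2 := by nlinarith [norm_nonneg C]
  have hdiv := Real.tendsto_sum_range_one_div_nat_succ_atTop
  obtain ⟨N, hN⟩ := (hdiv.eventually_gt_atTop (8 * (m * K) / (4 - ‖C‖ ^ 2))).exists
  have hge : ∑ n ∈ Finset.range N, 1 / ((n : ℝ) + 1) ≤ ∑ v ∈ B N, 1 / ((T.dep v : ℝ) + 1) := by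
    rw [fib N (fun n => 1 / ((n : ℝ) + 1))]
    refine Finset.sum_le_sum fun n hn => ?_
    have h1 : (1 : ℝ) ≤ (((B N).filter (fun v => T.dep v = n)).card : ℝ) := by
      exact_mod_cast hcard1 N n (Finset.mem_range.1 hn)
    exact le_mul_of_one_le_left (by positivity) h1
  have h4 := lt_of_lt_of_le hN hge
  rw [div_lt_iff₀ hpos] at h4
  have := key N
  linarith
end
end

section
/- Let T = (V, root, par) be a leafless, locally finite rooted directed tree. Then the Cesàro map Λ_T has no eigenvalues on ℓ²(V): there exist no λ ∈ ℂ and no nonzero f ∈ ℓ²(V) such that Λ_T f = λ f pointwise on V. In particular, when Λ_T defines a bounded operator C_T on ℓ²(V), the point spectrum of C_T is empty. -/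
noncomputable section

open scoped ENNReal

theorem aux_dep_child {V : Type} (T : TreeData V) (v : V) (hv : v ≠ T.root) :
    T.dep v = T.dep (T.par v) + 1 := by
  classical
  unfold TreeData.dep
  rw [Nat.find_eq_iff]
  refine ⟨?_, ?_⟩
  · have := Nat.find_spec (T.hroot (T.par v))
    rw [Function.iterate_succ_apply]
    convert this
  · intro m hm h
    cases m with
    | zero => exact hv h
    | succ k =>
      rw [Function.iterate_succ_apply] at h
      have := Nat.find_min' (T.hroot (T.par v)) h
      have h2 : k < Nat.find (T.hroot (T.par v)) := by
        convert Nat.lt_of_succ_lt_succ hm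
      omega

theorem aux_dep_root {V : Type} (T : TreeData V) : T.dep T.root = 0 := by
  classical
  unfold TreeData.dep
  rw [Nat.find_eq_zero]
  rfl

theorem aux_sum {V : Type} (T : TreeData V) (f : V → ℂ) (lam : ℂ)
    (h : ∀ v, T.cesaro f v = lam * f v) (v : V) :
    ∑ j ∈ Finset.range (T.dep v + 1), f (T.par^[j] v) = lam * (T.dep v + 1) * f v := by
  have h1 := h v
  unfold TreeData.cesaro at h1
  have h2 : ((T.dep v : ℂ) + 1) ≠ 0 := by exact_mod_cast Nat.succ_ne_zero (T.dep v)
  field_simp at h1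
  rw [h1]; ring

theorem aux_rec {V : Type} (T : TreeData V) (f : V → ℂ) (lam : ℂ)
    (h : ∀ v, T.cesaro f v = lam * f v) (v : V) (hv : v ≠ T.root) :
    (lam * (T.dep v + 1) - 1) * f v = lam * T.dep v * f (T.par v) := by
  have h1 := aux_sum T f lam h v
  have h2 := aux_sum T f lam h (T.par v)
  rw [Finset.sum_range_succ'] at h1
  simp only [Function.iterate_succ_apply, Function.iterate_zero, id] at h1
  rw [aux_dep_child T v hv, h2] at h1
  rw [aux_dep_child T v hv]
  push_cast at h1 ⊢
  linear_combination -h1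

theorem aux_main {V : Type} (T : TreeData V) (hl : ∀ u : V, (T.chi u).Nonempty)
    (lam : ℂ) (f : L2 V) (h : ∀ v : V, T.cesaro ⇑f v = lam * f v) : f = 0 := by
  have key : ∀ n : ℕ, ∀ v, T.dep v = n → f v = 0 := by
    intro n
    induction n using Nat.strong_induction_on with
    | _ n ih =>
    intro v hv
    by_contra hne
    have hlam : lam * (n + 1) = 1 := by
      by_cases hr : v = T.root
      · have h1 := aux_sum T f lam h v
        subst hr
        rw [aux_dep_root] at h1 hv
        subst hv
        simp at h1 ⊢
        exact mul_right_cancel₀ hne (by rw [one_mul]; exact h1.symm)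
      · have h1 := aux_rec T f lam h v hr
        have hd := aux_dep_child T v hr
        rw [ih _ (by omega) (T.par v) rfl, hv] at h1
        simp [hne] at h1
        linear_combination h1
    choose c hc using hl
    have hdep : ∀ u, T.dep (c u) = T.dep u + 1 := by
      intro u
      rw [aux_dep_child T _ (hc u).1, (hc u).2]
    have hdk : ∀ k, T.dep (c^[k] v) = n + k := by
      intro k
      induction k with
      | zero => simpa using hv
      | succ k ihk => rw [Function.iterate_succ_apply', hdep, ihk]; rfl
    have hn0 : (n : ℂ) + 1 ≠ 0 := by exact_mod_cast Nat.succ_ne_zero n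
    have hstep : ∀ k, ‖f v‖ ≤ ‖f (c^[k] v)‖ := by
      intro k
      induction k with
      | zero => simp
      | succ k ihk =>
        refine ihk.trans ?_
        have h1 := aux_rec T f lam h (c^[k+1] v)
          (by rw [Function.iterate_succ_apply']; exact (hc _).1)
        rw [hdk, Function.iterate_succ_apply', (hc _).2] at h1
        rw [Function.iterate_succ_apply']
        set a := f (c (c^[k] v))
        set b := f (c^[k] v)
        have h3 : ((k + 1 : ℕ) : ℂ) * a = ((n + (k + 1) : ℕ) : ℂ) * b := by
          push_cast at h1 ⊢
          linear_combination ((n : ℂ) + 1) * h1 + (((n : ℂ) + (k + 1)) * b -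
            ((n : ℂ) + (k + 1) + 1) * a) * hlam
        have h4 := congrArg norm h3
        rw [norm_mul, norm_mul, Complex.norm_natCast, Complex.norm_natCast] at h4
        push_cast at h4
        have : (0:ℝ) < k + 1 := by positivity
        have h5 : (0:ℝ) ≤ n * ‖b‖ := by positivity
        by_contra hlt
        push Not at hlt
        nlinarith
    have hinj : Function.Injective (fun k => c^[k] v) := by
      intro i j hij
      have := congrArg T.dep hij
      simp only [hdk] at this
      omega
    have hs : Summable fun w => ‖f w‖ ^ (2:ℝ) := by
      simpa using (lp.memℓp f).summable (by simp)
    have ht := (hs.comp_injective hinj).tendsto_atTop_zero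
    have hle := ge_of_tendsto' ht (b := ‖f v‖ ^ (2:ℝ)) (fun k =>
      Real.rpow_le_rpow (norm_nonneg _) (hstep k) (by norm_num))
    have : 0 < ‖f v‖ ^ (2:ℝ) := Real.rpow_pos_of_pos (norm_pos_iff.mpr hne) _
    linarith
  ext v
  simpa using key _ v rfl

/-- For a leafless, locally finite rooted directed tree, the Cesàro map has
no eigenvalues on `ℓ²(V)`; in particular, the point spectrum of the Cesàro operator `C_T`
(when it is bounded) is empty. -/
theorem cesaro_no_eigenvalues {V : Type} [Countable V] [Infinite V]
    (T : TreeData V)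
    (hleafless : ∀ u : V, (T.chi u).Nonempty)
    (hlocfin : ∀ u : V, (T.chi u).Finite) :
    (∀ (lam : ℂ) (f : L2 V), (∀ v : V, T.cesaro ⇑f v = lam * f v) → f = 0) ∧
    ∀ C : L2 V →L[ℂ] L2 V, (∀ (f : L2 V) (v : V), C f v = T.cesaro ⇑f v) →
      ∀ lam : ℂ, ¬ Module.End.HasEigenvalue (C : L2 V →ₗ[ℂ] L2 V) lam := by
  have hm := aux_main T hleafless
  refine ⟨hm, ?_⟩
  intro C hC lam hev
  obtain ⟨f, hf⟩ := hev.exists_hasEigenvector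
  refine hf.2 (hm lam f fun v => ?_)
  rw [← hC]
  have h1 : C f = lam • f := hf.apply_eq_smul
  rw [h1]
  simp
end
end

section
/- Fix a positive integer k. The map sending x ∈ ℓ²(ℕ) to the sequence m ↦ (k/((k+m+1)(m+1))) · Σ_{n=0}^{m} x(n) defines a bounded linear operator A on ℓ²(ℕ), and A is a compact operator. Equivalently, the lower-triangular matrix with entries a_{m,n} = k/((k+m+1)(m+1)) for m ≥ n and a_{m,n} = 0 for m < n defines a compact operator on ℓ²(ℕ). -/
noncomputable section

open scoped ENNReal

lemma aux_eval_bound (x : L2 ℕ) (m : ℕ) :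
    ‖∑ n ∈ Finset.range (m + 1), x n‖ ≤ Real.sqrt ((m : ℝ) + 1) * ‖x‖ := by
  have h1 : ‖∑ n ∈ Finset.range (m + 1), x n‖ ≤ ∑ n ∈ Finset.range (m + 1), ‖x n‖ :=
    norm_sum_le _ _
  have h2 : (∑ n ∈ Finset.range (m + 1), ‖x n‖) ^ 2
      ≤ ((m : ℝ) + 1) * ∑ n ∈ Finset.range (m + 1), ‖x n‖ ^ 2 := by
    have := sq_sum_le_card_mul_sum_sq (s := Finset.range (m + 1)) (f := fun n => ‖x n‖)
    simpa using this
  have h3 : ∑ n ∈ Finset.range (m + 1), ‖x n‖ ^ 2 ≤ ‖x‖ ^ 2 := by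
    have := lp.sum_rpow_le_norm_rpow (p := 2) (by simp) x (Finset.range (m + 1))
    simpa using this
  refine h1.trans ?_
  have hm : (0 : ℝ) ≤ (m : ℝ) + 1 := by positivity
  refine (sq_le_sq₀ (by positivity) (by positivity)).1 ?_
  rw [mul_pow, Real.sq_sqrt hm]
  exact h2.trans (mul_le_mul_of_nonneg_left h3 hm)

/-- The partial-sum functional. -/
def auxSum (m : ℕ) : L2 ℕ →L[ℂ] ℂ :=
  LinearMap.mkContinuous
    { toFun := fun x => ∑ n ∈ Finset.range (m + 1), x n
      map_add' := fun x y => Finset.sum_add_distrib (f := fun n => x n) (g := fun n => y n)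
      map_smul' := fun c x => by simp [Finset.mul_sum] }
    (Real.sqrt ((m : ℝ) + 1)) (fun x => aux_eval_bound x m)

lemma auxSum_apply (m : ℕ) (x : L2 ℕ) :
    auxSum m x = ∑ n ∈ Finset.range (m + 1), x n := rfl

lemma auxSum_norm (m : ℕ) : ‖auxSum m‖ ≤ Real.sqrt ((m : ℝ) + 1) :=
  LinearMap.mkContinuous_norm_le _ (Real.sqrt_nonneg _) _

/-- Evaluation functional. -/
def auxEval (j : ℕ) : L2 ℕ →L[ℂ] ℂ :=
  LinearMap.mkContinuous
    { toFun := fun x => x j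
      map_add' := fun x y => by simp
      map_smul' := fun c x => by simp }
    1 (fun x => by
      rw [one_mul]; exact lp.norm_apply_le_norm (by simp) x j)

lemma auxEval_apply (m : ℕ) (x : L2 ℕ) : auxEval m x = x m := rfl

/-- Row operator. -/
def auxRow (k m : ℕ) : L2 ℕ →L[ℂ] L2 ℕ :=
  (((k : ℂ) / (((k : ℂ) + m + 1) * ((m : ℂ) + 1))) • auxSum m).smulRight (lp.single 2 m (1 : ℂ))

lemma auxRow_norm (k m : ℕ) : ‖auxRow k m‖ ≤ (k : ℝ) * (1 / ((m + 1 : ℕ) : ℝ) ^ (3 / 2 : ℝ)) := by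
  have hm : (0 : ℝ) < (m : ℝ) + 1 := by positivity
  have h1 : ‖((k : ℂ) / (((k : ℂ) + m + 1) * ((m : ℂ) + 1)))‖
      = (k : ℝ) / (((k : ℝ) + m + 1) * ((m : ℝ) + 1)) := by
    have : ((k : ℂ) / (((k : ℂ) + m + 1) * ((m : ℂ) + 1)))
      = (((k : ℝ) / (((k : ℝ) + m + 1) * ((m : ℝ) + 1)) : ℝ) : ℂ) := by push_cast; rfl
    rw [this, Complex.norm_real, Real.norm_of_nonneg (by positivity)]
  have h2 : ((m : ℝ) + 1) ^ (3 / 2 : ℝ) = ((m : ℝ) + 1) * Real.sqrt ((m : ℝ) + 1) := by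
    rw [Real.sqrt_eq_rpow, ← Real.rpow_one_add' hm.le (by norm_num)]; norm_num
  rw [auxRow, ContinuousLinearMap.norm_smulRight_apply, lp.norm_single (by simp), norm_smul, h1]
  push_cast
  rw [h2, norm_one, mul_one]
  have hs : 0 < Real.sqrt ((m : ℝ) + 1) := Real.sqrt_pos.2 hm
  have hss : Real.sqrt ((m : ℝ) + 1) * Real.sqrt ((m : ℝ) + 1) = (m : ℝ) + 1 :=
    Real.mul_self_sqrt hm.le
  calc _ ≤ (k : ℝ) / (((m : ℝ) + 1) * ((m : ℝ) + 1)) * Real.sqrt ((m : ℝ) + 1) := by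
        gcongr
        · have : (0 : ℝ) ≤ k := by positivity
          linarith
        · exact auxSum_norm m
    _ = _ := by
        field_simp
        nlinarith

lemma auxRow_summable (k : ℕ) : Summable (auxRow k) := by
  refine Summable.of_norm_bounded ?_ (auxRow_norm k)
  refine Summable.mul_left _ ?_
  exact (summable_nat_add_iff (f := fun n : ℕ => 1 / (n : ℝ) ^ (3 / 2 : ℝ)) 1).2
    (Real.summable_one_div_nat_rpow.2 (by norm_num))

lemma auxRow_compact (k m : ℕ) : IsCompactOperator (auxRow k m) := by
  have h : IsCompactOperator
      (((k : ℂ) / (((k : ℂ) + m + 1) * ((m : ℂ) + 1))) • auxSum m) :=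
    isCompactOperator_of_locallyCompactSpace_dom
      (((k : ℂ) / (((k : ℂ) + m + 1) * ((m : ℂ) + 1))) • auxSum m)
  exact h.clm_comp (ContinuousLinearMap.toSpanSingleton ℂ (lp.single 2 m (1 : ℂ) : L2 ℕ))

/-- For a fixed positive integer `k`, the lower-triangular matrix with entries
`a_{m,n} = k/((k+m+1)(m+1))` for `m ≥ n` (and `0` otherwise) defines a bounded operator on
`ℓ²(ℕ)`, and this operator is compact. -/
theorem compact_triangular_operator (k : ℕ) (hk : 0 < k) :
    ∃ A : L2 ℕ →L[ℂ] L2 ℕ,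
      (∀ (x : L2 ℕ) (m : ℕ),
        A x m = ((k : ℂ) / (((k : ℂ) + m + 1) * ((m : ℂ) + 1))) *
          ∑ n ∈ Finset.range (m + 1), x n) ∧
      IsCompactOperator A := by
  have hs := (auxRow_summable k).hasSum
  refine ⟨∑' m, auxRow k m, fun x m => ?_, ?_⟩
  · have h1 := (hs.mapL (ContinuousLinearMap.apply ℂ (L2 ℕ) x)).mapL (auxEval m)
    have h2 := hasSum_single (f := fun b => auxEval m (ContinuousLinearMap.apply ℂ (L2 ℕ) x
      (auxRow k b))) m (fun j hj => by
        simp [auxEval_apply, auxRow, lp.single_apply, hj.symm])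
    have h3 := h1.unique h2
    simpa [auxEval_apply, auxRow, auxSum_apply] using h3
  · refine isCompactOperator_of_tendsto (l := Filter.atTop) hs
      (Filter.Eventually.of_forall fun s => ?_)
    exact (compactOperator (RingHom.id ℂ) (L2 ℕ) (L2 ℕ)).sum_mem
      (fun m _ => auxRow_compact k m)
end
end

section
/- Let T = (V, root, par) be a leafless, locally finite rooted directed tree of finite branching index. Then the spectrum of the bounded Cesàro operator C_T on ℓ²(V) equals the closed disc {λ ∈ ℂ : |λ − 1| ≤ 1}. -/
noncomputable section

open scoped ENNReal

/-- A branching vertex: a vertex with at least two children. -/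
def TreeData.branching {V : Type} (T : TreeData V) (v : V) : Prop := 2 ≤ (T.chi v).encard

namespace CesaroAux

variable {V : Type}

theorem dep_root (T : TreeData V) : T.dep T.root = 0 := by
  classical
  unfold TreeData.dep
  rw [Nat.find_eq_zero]; rfl

theorem dep_succ (T : TreeData V) {v : V} (hv : v ≠ T.root) :
    T.dep v = T.dep (T.par v) + 1 := by
  classical
  unfold TreeData.dep
  exact Nat.find_comp_succ (T.hroot v) (T.hroot (T.par v)) (by simpa using hv)

theorem dep_eq_zero (T : TreeData V) {v : V} (h : T.dep v = 0) : v = T.root := by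
  by_contra hv
  have := dep_succ T hv
  omega

theorem dep_iter (T : TreeData V) (j : ℕ) : ∀ v : V, T.dep (T.par^[j] v) = T.dep v - j := by
  induction j with
  | zero => intro v; simp
  | succ j ih =>
    intro v
    rw [Function.iterate_succ_apply, ih]
    by_cases hv : v = T.root
    · subst hv; rw [T.par_root, dep_root]; simp
    · rw [dep_succ T hv]; omega

/-- rays -/
structure IsRay (T : TreeData V) (p : ℕ → V) : Prop where
  zero : p 0 = T.root
  succ : ∀ n, p (n + 1) ∈ T.chi (p n)

theorem IsRay.dep {T : TreeData V} {p : ℕ → V} (h : IsRay T p) (n : ℕ) : T.dep (p n) = n := by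
  induction n with
  | zero => rw [h.zero, dep_root]
  | succ n ih =>
    have := h.succ n
    rw [dep_succ T this.1, this.2, ih]

theorem IsRay.inj {T : TreeData V} {p : ℕ → V} (h : IsRay T p) : Function.Injective p := by
  intro a b hab
  rw [← h.dep a, hab, h.dep]

theorem IsRay.par_iter {T : TreeData V} {p : ℕ → V} (h : IsRay T p) (j : ℕ) :
    ∀ n, T.par^[j] (p (n + j)) = p n := by
  induction j with
  | zero => intro n; rfl
  | succ j ih =>
    intro n
    rw [Function.iterate_succ_apply, ← add_assoc, (h.succ (n + j)).2, ih]

theorem IsRay.cesaro {T : TreeData V} {p : ℕ → V} (h : IsRay T p) (f : V → ℂ) (n : ℕ) :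
    T.cesaro f (p n) = ((n : ℂ) + 1)⁻¹ * ∑ j ∈ Finset.range (n + 1), f (p j) := by
  unfold TreeData.cesaro
  rw [h.dep, ← Finset.sum_range_reflect (fun j => f (p j))]
  congr 1
  apply Finset.sum_congr rfl
  intro j hj
  have hj' : j ≤ n := by simpa [Nat.lt_succ_iff] using hj
  have := h.par_iter j (n - j)
  rw [Nat.sub_add_cancel hj'] at this
  rw [this]
  congr 2

theorem exists_ray (T : TreeData V) (hleafless : ∀ u : V, (T.chi u).Nonempty) (v : V) :
    ∃ p, IsRay T p ∧ p (T.dep v) = v := by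
  choose c hc using hleafless
  refine ⟨fun n => if n ≤ T.dep v then T.par^[T.dep v - n] v else c^[n - T.dep v] v, ⟨?_, ?_⟩, ?_⟩
  · simp only [Nat.zero_le, if_true, Nat.sub_zero]
    apply dep_eq_zero
    rw [dep_iter]; simp
  · intro n
    rcases lt_trichotomy n (T.dep v) with hn | hn | hn
    · have h1 : n + 1 ≤ T.dep v := hn
      simp only [h1, hn.le, if_true]
      constructor
      · intro h
        have := congrArg T.dep h
        rw [dep_iter, dep_root] at this
        omega
      · rw [← Function.iterate_succ_apply' T.par]
        congr 2
        omega
    · subst hn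
      simpa using hc v
    · have h1 : ¬ n + 1 ≤ T.dep v := by omega
      have h2 : ¬ n ≤ T.dep v := by omega
      simp only [h1, h2, if_false]
      have : n + 1 - T.dep v = (n - T.dep v) + 1 := by omega
      rw [this, Function.iterate_succ_apply']
      exact hc _
  · simp

theorem ray_eq (T : TreeData V) {B : ℕ} (hB : ∀ v : V, T.branching v → T.dep v ≤ B)
    {p q : ℕ → V} (hp : IsRay T p) (hq : IsRay T q) (h : p (B + 1) = q (B + 1)) (n : ℕ) :
    p n = q n := by
  rcases le_total n (B + 1) with hn | hn
  · obtain ⟨k, hk⟩ := Nat.exists_eq_add_of_le hn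
    rw [← hp.par_iter k n, ← hq.par_iter k n, ← hk, h]
  · induction n, hn using Nat.le_induction with
    | base => exact h
    | succ n hn ih =>
      by_contra hne
      have h1 := hp.succ n
      have h2 := hq.succ n
      rw [← ih] at h2
      have hb : T.branching (p n) := by
        unfold TreeData.branching
        rw [← Set.encard_pair hne]
        apply Set.encard_le_encard
        rintro x (rfl | rfl)
        · exact h1
        · exact h2
      have := hB _ hb
      rw [hp.dep] at this
      omega

theorem level_finite (T : TreeData V) (hlocfin : ∀ u : V, (T.chi u).Finite) (n : ℕ) :
    (T.level n).Finite := by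
  induction n with
  | zero =>
    apply (Set.finite_singleton T.root).subset
    intro v hv
    exact dep_eq_zero T hv
  | succ n ih =>
    apply (ih.biUnion (fun u _ => hlocfin u)).subset
    intro v hv
    have hv' : T.dep v = n + 1 := hv
    have hne : v ≠ T.root := by
      rintro rfl
      rw [dep_root] at hv'; omega
    have := dep_succ T hne
    simp only [Set.mem_iUnion]
    exact ⟨T.par v, show T.dep (T.par v) = n by omega, hne, rfl⟩

/-- solving the equation pointwise -/
theorem exists_sol (T : TreeData V) (l : ℂ) (hl : ∀ n : ℕ, l ≠ ((n : ℂ) + 1)⁻¹) (g : V → ℂ) :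
    ∃ f : V → ℂ, ∀ v, l * f v - T.cesaro f v = g v := by
  classical
  let F : ∀ v : V, (∀ u : V, T.dep u < T.dep v → ℂ) → ℂ := fun v ih =>
    (l - ((T.dep v : ℂ) + 1)⁻¹)⁻¹ * (g v + ((T.dep v : ℂ) + 1)⁻¹ *
      ∑ j ∈ Finset.range (T.dep v),
        if h : T.dep (T.par^[j + 1] v) < T.dep v then ih _ h else 0)
  have wf : WellFounded (fun u v : V => T.dep u < T.dep v) := (measure T.dep).wf
  refine ⟨wf.fix F, fun v => ?_⟩
  have h1 : wf.fix F v = _ := wf.fix_eq F v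
  have h2 : l - ((T.dep v : ℂ) + 1)⁻¹ ≠ 0 := sub_ne_zero.2 (hl _)
  have h3 : (l - ((T.dep v : ℂ) + 1)⁻¹) * wf.fix F v = g v + ((T.dep v : ℂ) + 1)⁻¹ *
      ∑ j ∈ Finset.range (T.dep v), wf.fix F (T.par^[j + 1] v) := by
    rw [h1]
    simp only [F]
    rw [mul_inv_cancel_left₀ h2]
    congr 2
    apply Finset.sum_congr rfl
    intro j hj
    rw [dif_pos]
    rw [dep_iter]
    have := Finset.mem_range.1 hj
    omega
  unfold TreeData.cesaro
  rw [Finset.sum_range_succ']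
  simp only [Function.iterate_zero, id]
  linear_combination h3

/-- the truncated contraction estimate -/
theorem contraction (h : ℕ → ℂ) (N : ℕ) :
    ∑ n ∈ Finset.range N, ‖h n - ((n : ℂ) + 1)⁻¹ * ∑ j ∈ Finset.range (n + 1), h j‖ ^ 2
      ≤ ∑ n ∈ Finset.range N, ‖h n‖ ^ 2 := by
  suffices H : ∑ n ∈ Finset.range N,
      ‖h n - ((n : ℂ) + 1)⁻¹ * ∑ j ∈ Finset.range (n + 1), h j‖ ^ 2
      + ‖∑ j ∈ Finset.range N, h j‖ ^ 2 / N ≤ ∑ n ∈ Finset.range N, ‖h n‖ ^ 2 by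
    have : 0 ≤ ‖∑ j ∈ Finset.range N, h j‖ ^ 2 / (N : ℝ) := by positivity
    linarith
  induction N with
  | zero => simp
  | succ N ih =>
    rw [Finset.sum_range_succ, Finset.sum_range_succ (fun n => ‖h n‖ ^ 2)]
    set s := ∑ j ∈ Finset.range N, h j with hs
    have key : ‖h N - ((N : ℂ) + 1)⁻¹ * ∑ j ∈ Finset.range (N + 1), h j‖ ^ 2
        + ‖∑ j ∈ Finset.range (N + 1), h j‖ ^ 2 / ((N + 1 : ℕ) : ℝ)
        ≤ ‖h N‖ ^ 2 + ‖s‖ ^ 2 / N := by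
      rw [Finset.sum_range_succ, ← hs]
      rcases Nat.eq_zero_or_pos N with h0 | h0
      · subst h0
        simp [hs]
      · have hN : (0 : ℝ) < N := by exact_mod_cast h0
        have e : ((N : ℂ) + 1)⁻¹ = (((N : ℝ) + 1)⁻¹ : ℝ) := by push_cast; rfl
        rw [e]
        simp only [← Complex.normSq_eq_norm_sq, Complex.normSq_apply, Complex.sub_re,
          Complex.sub_im, Complex.add_re, Complex.add_im, Complex.mul_re, Complex.mul_im,
          Complex.ofReal_re, Complex.ofReal_im]
        push_cast
        generalize (h N).re = a
        generalize (h N).im = b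
        generalize s.re = x
        generalize s.im = y
        rw [← sub_nonneg]
        have : a * a + b * b + (x * x + y * y) / (N:ℝ) -
          ((a - (((N:ℝ) + 1)⁻¹ * (x + a) - 0 * (y + b))) * (a - (((N:ℝ) + 1)⁻¹ * (x + a) - 0 * (y + b))) +
          (b - (((N:ℝ) + 1)⁻¹ * (y + b) + 0 * (x + a))) * (b - (((N:ℝ) + 1)⁻¹ * (y + b) + 0 * (x + a))) +
          ((x + a) * (x + a) + (y + b) * (y + b)) / ((N:ℝ) + 1))
          = ((N * a - x) ^ 2 + (N * b - y) ^ 2) / (N * (N + 1) ^ 2) := by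
          field_simp
          ring
        rw [this]
        positivity
    linarith

theorem sol_bound (l : ℂ) (hl : 1 < ‖l - 1‖) : ∃ K : ℝ, 0 ≤ K ∧ ∀ (g h : ℕ → ℂ)
    (_ : ∀ n, l * h n - ((n : ℂ) + 1)⁻¹ * ∑ j ∈ Finset.range (n + 1), h j = g n) (N : ℕ),
    ∑ n ∈ Finset.range N, ‖h n‖ ^ 2 ≤ K * ∑ n ∈ Finset.range N, ‖g n‖ ^ 2 := by
  set r := ‖l - 1‖ with hr
  obtain ⟨e, he, hre⟩ : ∃ e : ℝ, 0 < e ∧ r ^ 2 = 1 + 2 * e :=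
    ⟨(r ^ 2 - 1) / 2, by nlinarith, by ring⟩
  refine ⟨(1 + 1 / e) / e, by positivity, fun g h hgh N => ?_⟩
  have hc := contraction h N
  set d : ℕ → ℂ := fun n => h n - ((n : ℂ) + 1)⁻¹ * ∑ j ∈ Finset.range (n + 1), h j with hd
  have hpt : ∀ n, r ^ 2 * ‖h n‖ ^ 2 ≤ (1 + 1 / e) * ‖g n‖ ^ 2 + (1 + e) * ‖d n‖ ^ 2 := by
    intro n
    have h1 : (l - 1) * h n = g n - d n := by
      rw [← hgh n]; simp only [hd]; ring
    have h2 : r * ‖h n‖ ≤ ‖g n‖ + ‖d n‖ := by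
      rw [hr, ← norm_mul, h1]; exact norm_sub_le _ _
    have h3 : (r * ‖h n‖) ^ 2 ≤ (‖g n‖ + ‖d n‖) ^ 2 :=
      pow_le_pow_left₀ (by positivity) h2 2
    have h4 : (1 + 1 / e) * ‖g n‖ ^ 2 + (1 + e) * ‖d n‖ ^ 2 - (‖g n‖ + ‖d n‖) ^ 2
        = (‖g n‖ - e * ‖d n‖) ^ 2 / e := by
      field_simp; ring
    have h5 : 0 ≤ (‖g n‖ - e * ‖d n‖) ^ 2 / e := by positivity
    nlinarith
  have hsum := Finset.sum_le_sum (fun n (_ : n ∈ Finset.range N) => hpt n)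
  rw [Finset.sum_add_distrib, ← Finset.mul_sum, ← Finset.mul_sum, ← Finset.mul_sum] at hsum
  set H := ∑ n ∈ Finset.range N, ‖h n‖ ^ 2
  set G := ∑ n ∈ Finset.range N, ‖g n‖ ^ 2
  have : (1 + e) * ∑ n ∈ Finset.range N, ‖d n‖ ^ 2 ≤ (1 + e) * H := by gcongr
  rw [hre] at hsum
  rw [div_mul_eq_mul_div, le_div_iff₀ he]
  nlinarith

theorem summable_sq (f : L2 V) : Summable (fun v => ‖f v‖ ^ 2) := by
  have := (lp.memℓp f).summable (by norm_num)
  simpa using this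

theorem memlp_of_summable {f : V → ℂ} (h : Summable (fun v => ‖f v‖ ^ 2)) :
    Memℓp f 2 := by
  apply memℓp_gen
  simpa using h

theorem sol_summable (T : TreeData V)
    (hleafless : ∀ u : V, (T.chi u).Nonempty)
    (hlocfin : ∀ u : V, (T.chi u).Finite)
    {B : ℕ} (hB : ∀ v : V, T.branching v → T.dep v ≤ B) {l : ℂ} (hl : 1 < ‖l - 1‖)
    (g f : V → ℂ) (hg : Summable (fun v => ‖g v‖ ^ 2))
    (hfg : ∀ v, l * f v - T.cesaro f v = g v) : Summable (fun v => ‖f v‖ ^ 2) := by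
  obtain ⟨K, hK, hKb⟩ := sol_bound l hl
  have hray : ∀ p, IsRay T p → Summable (fun n => ‖f (p n)‖ ^ 2) := by
    intro p hp
    have hgp : Summable (fun n => ‖g (p n)‖ ^ 2) := hg.comp_injective hp.inj
    apply summable_of_sum_range_le (c := K * ∑' n, ‖g (p n)‖ ^ 2) (fun n => by positivity)
    intro N
    refine (hKb (fun n => g (p n)) (fun n => f (p n)) (fun n => ?_) N).trans ?_
    · rw [← hp.cesaro f n]; exact hfg _
    · gcongr
      exact hgp.sum_le_tsum _ (fun n _ => by positivity)
  choose q hq hqv using exists_ray T hleafless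
  have : Finite (T.level (B + 1)) := level_finite T hlocfin (B + 1)
  let w : V → T.level (B + 1) := fun v => ⟨q v (B + 1), (hq v).dep _⟩
  have hw : ∀ v, q (w v) (T.dep v) = v := by
    intro v
    rw [ray_eq T hB (hq (w v)) (hq v) _ (T.dep v), hqv]
    have h1 : T.dep (w v : V) = B + 1 := (w v).2
    have h2 := hqv (w v)
    rw [h1] at h2
    exact h2
  have hs : Summable (fun x : (Σ _ : T.level (B + 1), ℕ) => ‖f (q x.1 x.2)‖ ^ 2) := by
    rw [summable_sigma_of_nonneg (fun x => by positivity)]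
    refine ⟨fun x => hray _ (hq x), ?_⟩
    haveI := Fintype.ofFinite (T.level (B + 1))
    exact (hasSum_fintype _).summable
  have hinj : Function.Injective (fun v : V => (⟨w v, T.dep v⟩ : (Σ _ : T.level (B + 1), ℕ))) := by
    intro a b hab
    simp only [Sigma.mk.injEq, heq_eq_eq] at hab
    rw [← hw a, ← hw b, hab.1, hab.2]
  have := hs.comp_injective hinj
  refine this.congr (fun v => ?_)
  simp only [Function.comp]
  rw [hw]

theorem inj_zero (T : TreeData V) (l : ℂ) (hl : ∀ n : ℕ, l ≠ ((n : ℂ) + 1)⁻¹) (f : V → ℂ)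
    (hf : ∀ v, l * f v - T.cesaro f v = 0) (n : ℕ) : ∀ v, T.dep v = n → f v = 0 := by
  induction n using Nat.strong_induction_on with
  | _ n ih =>
    intro v hv
    have h := hf v
    unfold TreeData.cesaro at h
    rw [Finset.sum_range_succ', Finset.sum_eq_zero] at h
    · simp only [Function.iterate_zero, id, zero_add] at h
      rw [← sub_mul] at h
      exact (mul_eq_zero.1 h).resolve_left (sub_ne_zero.2 (hl _))
    · intro j hj
      have := Finset.mem_range.1 hj
      exact ih (n - (j + 1)) (by omega) _ (by rw [dep_iter, hv])

theorem outside (T : TreeData V)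
    (hleafless : ∀ u : V, (T.chi u).Nonempty)
    (hlocfin : ∀ u : V, (T.chi u).Finite)
    (hfbi : ∃ B : ℕ, ∀ v : V, T.branching v → T.dep v ≤ B)
    (C : L2 V →L[ℂ] L2 V) (hC : ∀ (f : L2 V) (v : V), C f v = T.cesaro ⇑f v)
    (l : ℂ) (hl1 : 1 < ‖l - 1‖) : IsUnit (algebraMap ℂ (L2 V →L[ℂ] L2 V) l - C) := by
  obtain ⟨B, hB⟩ := hfbi
  have hl : ∀ n : ℕ, l ≠ ((n : ℂ) + 1)⁻¹ := by
    rintro n rfl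
    have e : ((n : ℂ) + 1)⁻¹ - 1 = ((((n : ℝ) + 1)⁻¹ - 1 : ℝ) : ℂ) := by push_cast; rfl
    rw [e, Complex.norm_real, Real.norm_eq_abs] at hl1
    have h1 : (0 : ℝ) < ((n : ℝ) + 1)⁻¹ := by positivity
    have h2 : ((n : ℝ) + 1)⁻¹ ≤ 1 := inv_le_one_of_one_le₀ (by linarith [n.cast_nonneg (α := ℝ)])
    rw [abs_of_nonpos (by linarith)] at hl1
    linarith
  have happ : ∀ (f : L2 V) (v : V),
      ((algebraMap ℂ (L2 V →L[ℂ] L2 V) l - C) f) v = l * f v - T.cesaro f v := by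
    intro f v
    rw [← hC]
    rfl
  rw [ContinuousLinearMap.isUnit_iff_bijective]
  constructor
  · rw [injective_iff_map_eq_zero]
    intro f hf
    ext v
    have : ∀ v, l * f v - T.cesaro f v = 0 := by
      intro v
      rw [← happ, hf]; rfl
    exact inj_zero T l hl f this _ v rfl
  · intro g
    obtain ⟨f, hf⟩ := exists_sol T l hl g
    have := sol_summable T hleafless hlocfin hB hl1 g f (summable_sq g) hf
    refine ⟨⟨f, memlp_of_summable this⟩, ?_⟩
    ext v
    rw [happ]
    exact hf v

theorem inside_seq (l : ℂ) (hl : ‖l - 1‖ < 1) (a b : ℕ → ℂ)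
    (hb : ∀ n, b n = ((n : ℂ) + 1)⁻¹ * ∑ j ∈ Finset.range (n + 1), a j)
    (hbs : Summable (fun n => ‖b n‖ ^ 2))
    (h0 : l * a 0 - b 0 = 1) (h1 : ∀ n, l * a (n + 1) - b (n + 1) = 0) : False := by
  have hl0 : l ≠ 0 := by
    rintro rfl; norm_num at hl
  set m := l⁻¹ with hm
  have hre : 1 < 2 * m.re := by
    have hn : ‖l - 1‖ ^ 2 < 1 := by nlinarith [norm_nonneg (l - 1)]
    rw [← Complex.normSq_eq_norm_sq, Complex.normSq_apply] at hn
    simp only [Complex.sub_re, Complex.sub_im, Complex.one_re, Complex.one_im] at hn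
    have hp : 0 < Complex.normSq l := Complex.normSq_pos.2 hl0
    rw [hm, Complex.inv_re, ← mul_div_assoc, lt_div_iff₀ hp, Complex.normSq_apply]
    nlinarith
  set s : ℕ → ℂ := fun n => ∑ j ∈ Finset.range (n + 1), a j with hs
  have hsb : ∀ n, s n = ((n : ℂ) + 1) * b n := by
    intro n
    have : (n : ℂ) + 1 ≠ 0 := Nat.cast_add_one_ne_zero n
    rw [hb, mul_inv_cancel_left₀ this]
  have hstep : ∀ n : ℕ, ((n : ℂ) + 2 - m) * s (n + 1) = ((n : ℂ) + 2) * s n := by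
    intro n
    have e1 : s (n + 1) = s n + a (n + 1) := Finset.sum_range_succ _ _
    have e2 : a (n + 1) = m * b (n + 1) := by
      rw [hm, ← sub_eq_zero.1 (h1 n), inv_mul_cancel_left₀ hl0]
    have e3 := hsb (n + 1)
    push_cast at e3
    linear_combination ((n : ℂ) + 2) * e1 + ((n : ℂ) + 2) * e2 - m * e3
  have hsne : ∀ n, s n ≠ 0 := by
    intro n
    induction n with
    | zero =>
      intro h
      have hb0 := hb 0
      have : a 0 = 0 := by simpa [hs] using h
      simp [this] at hb0
      rw [this, hb0] at h0
      simp at h0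
    | succ n ih =>
      intro h
      have := hstep n
      rw [h, mul_zero] at this
      have h2 : (n : ℂ) + 2 ≠ 0 := by exact_mod_cast (by omega : n + 2 ≠ 0)
      exact (mul_ne_zero h2 ih) this.symm
  obtain ⟨N0, hN0⟩ := exists_nat_gt (Complex.normSq m / (2 * m.re - 1))
  have hmono : ∀ n, N0 ≤ n → ‖s n‖ ^ 2 / ((n : ℝ) + 1) ≤ ‖s (n + 1)‖ ^ 2 / ((n : ℝ) + 2) := by
    intro n hn
    have hn' : (N0 : ℝ) ≤ n := by exact_mod_cast hn
    have hnn : (0 : ℝ) ≤ n := n.cast_nonneg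
    rw [div_lt_iff₀ (by linarith)] at hN0
    have hm1 : Complex.normSq m ≤ ((n : ℝ) + 2) * (2 * m.re - 1) := by
      nlinarith
    have e := congrArg (fun z => ‖z‖ ^ 2) (hstep n)
    simp only [norm_mul, mul_pow] at e
    have e4 : ‖(n : ℂ) + 2‖ ^ 2 = ((n : ℝ) + 2) ^ 2 := by
      rw [← Complex.normSq_eq_norm_sq, Complex.normSq_apply]
      simp; ring
    have e5 : ‖(n : ℂ) + 2 - m‖ ^ 2 ≤ ((n : ℝ) + 2) * ((n : ℝ) + 1) := by
      rw [← Complex.normSq_eq_norm_sq, Complex.normSq_apply]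
      rw [Complex.normSq_apply] at hm1
      simp
      nlinarith
    rw [e4] at e
    have e6 : ((n : ℝ) + 2) ^ 2 * ‖s n‖ ^ 2 ≤ ((n : ℝ) + 2) * ((n : ℝ) + 1) * ‖s (n + 1)‖ ^ 2 := by
      rw [← e]; gcongr
    rw [div_le_div_iff₀ (by positivity) (by positivity)]
    have : (0 : ℝ) < n + 2 := by positivity
    nlinarith
  set c := ‖s N0‖ ^ 2 / ((N0 : ℝ) + 1) with hc
  have hcpos : 0 < c := by
    have := norm_pos_iff.2 (hsne N0)
    positivity
  have hlow : ∀ n, N0 ≤ n → c ≤ ‖s n‖ ^ 2 / ((n : ℝ) + 1) := by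
    intro n hn
    induction n, hn using Nat.le_induction with
    | base => exact le_rfl
    | succ n hn ih =>
      refine ih.trans ((hmono n hn).trans (le_of_eq ?_))
      push_cast; congr 1; ring
  have hbl : ∀ n, N0 ≤ n → c * (1 / ((n : ℝ) + 1)) ≤ ‖b n‖ ^ 2 := by
    intro n hn
    have h := hlow n hn
    have e4 : ‖(n : ℂ) + 1‖ ^ 2 = ((n : ℝ) + 1) ^ 2 := by
      rw [← Complex.normSq_eq_norm_sq, Complex.normSq_apply]
      simp; ring
    rw [hsb, norm_mul, mul_pow, e4] at h
    have hp : (0 : ℝ) < n + 1 := by positivity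
    rw [le_div_iff₀ hp] at h
    rw [mul_one_div, div_le_iff₀ hp]
    nlinarith
  have hsum : Summable (fun n : ℕ => c * (1 / ((n : ℝ) + 1))) := by
    rw [← summable_nat_add_iff N0]
    refine Summable.of_nonneg_of_le (fun n => by positivity) (fun n => hbl _ (by omega))
      ((summable_nat_add_iff N0).2 hbs)
  rw [summable_mul_left_iff hcpos.ne'] at hsum
  have h3 : Summable (fun n : ℕ => 1 / (n : ℝ)) := by
    rw [← summable_nat_add_iff 1]
    simpa using hsum
  exact Real.not_summable_one_div_natCast h3

theorem inside (T : TreeData V)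
    (hleafless : ∀ u : V, (T.chi u).Nonempty)
    (C : L2 V →L[ℂ] L2 V) (hC : ∀ (f : L2 V) (v : V), C f v = T.cesaro ⇑f v)
    (l : ℂ) (hl1 : ‖l - 1‖ < 1) : ¬ IsUnit (algebraMap ℂ (L2 V →L[ℂ] L2 V) l - C) := by
  classical
  intro hu
  rw [ContinuousLinearMap.isUnit_iff_bijective] at hu
  obtain ⟨f, hf⟩ := hu.2 (lp.single 2 T.root (1 : ℂ))
  obtain ⟨p, hp, -⟩ := exists_ray T hleafless T.root
  have happ : ∀ n, l * f (p n) - C f (p n) = (lp.single 2 T.root (1 : ℂ) : L2 V) (p n) := by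
    intro n; rw [← hf]; rfl
  refine inside_seq l hl1 (fun n => f (p n)) (fun n => C f (p n))
    (fun n => by rw [hC, hp.cesaro]) ((summable_sq (C f)).comp_injective hp.inj) ?_ ?_
  · simp only []
    rw [happ, hp.zero]; simp
  · intro n
    simp only []
    rw [happ]
    have := (hp.succ n).1
    simp [this]

end CesaroAux

/-- For a leafless, locally finite rooted directed tree of finite branching
index, the spectrum of the bounded Cesàro operator `C_T` is the closed disc of radius `1`
centered at `1`. -/
theorem spectrum_cesaro {V : Type} [Countable V] [Infinite V]
    (T : TreeData V)
    (hleafless : ∀ u : V, (T.chi u).Nonempty)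
    (hlocfin : ∀ u : V, (T.chi u).Finite)
    (hfbi : ∃ B : ℕ, ∀ v : V, T.branching v → T.dep v ≤ B)
    (C : L2 V →L[ℂ] L2 V) (hC : ∀ (f : L2 V) (v : V), C f v = T.cesaro ⇑f v) :
    spectrum ℂ C = Metric.closedBall (1 : ℂ) 1 := by
  apply Set.Subset.antisymm
  · intro l hl
    rw [spectrum.mem_iff] at hl
    rw [Metric.mem_closedBall, dist_eq_norm]
    by_contra h
    exact hl (CesaroAux.outside T hleafless hlocfin hfbi C hC l (not_le.1 h))
  · rw [← closure_ball (1 : ℂ) one_ne_zero]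
    refine closure_minimal ?_ (spectrum.isClosed C)
    intro l hl
    rw [Metric.mem_ball, dist_eq_norm] at hl
    rw [spectrum.mem_iff]
    exact CesaroAux.inside T hleafless C hC l hl
end
end
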